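/- Let M be a right R-module and let Ω : End_R(M) → End_R(Ẽ(M)) be the canonical ring embedding sending φ to its unique extension φ̃. If M is quasi-injective, then Ω is a ring isomorphism. Conversely, if M is polyform and Ω is a ring isomorphism, then M is quasi-injective. -/

import Mathlib

/- Right `R`-modules are rendered as left `R`-modules (i.e. we work over the
opposite ring), so "`x·r`" becomes "`r • x`". -/

/-- `A` is a dense submodule of `B` (for submodules `A ≤ B` of an ambient
module `E`). -/
def DenseIn (R : Type*) [Ring R] {E : Type*} [AddCommGroup E] [Module R E]
    (A B : Submodule R E) : Prop :=
  ∀ x ∈ B, ∀ y ∈ B, y ≠ (0 : E) → ∃ r : R, r • x ∈ A ∧ r • y ≠ 0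

/-- `A` is an essential submodule of `B` (inside the ambient module `E`). -/
def EssentialIn (R : Type*) [Ring R] {E : Type*} [AddCommGroup E] [Module R E]
    (A B : Submodule R E) : Prop :=
  ∀ P : Submodule R E, P ≤ B → P ⊓ A = ⊥ → P = ⊥

/-- `B` is polyform: every essential submodule of `B` is dense in `B`. -/
def PolyformIn (R : Type*) [Ring R] {E : Type*} [AddCommGroup E] [Module R E]
    (B : Submodule R E) : Prop :=
  ∀ A : Submodule R E, A ≤ B → EssentialIn R A B → DenseIn R A B

/-- The rational hull of `M` computed inside `E`. -/
def ratHull (R : Type*) [Ring R] (E : Type*) [AddCommGroup E] [Module R E]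
    (M : Submodule R E) : Submodule R E where
  carrier := {x | ∀ ϑ : E →ₗ[R] E, (∀ m ∈ M, ϑ m = 0) → ϑ x = 0}
  add_mem' := by
    intro a b ha hb ϑ h
    simp only [Set.mem_setOf_eq] at *
    rw [map_add, ha ϑ h, hb ϑ h, add_zero]
  zero_mem' := by
    intro ϑ _
    exact map_zero ϑ
  smul_mem' := by
    intro r x hx ϑ h
    simp only [Set.mem_setOf_eq] at *
    rw [map_smul, hx ϑ h, smul_zero]

/-! For `ϑ ∈ End_R(E)`, the submodule `M ⊓ ϑ⁻¹(M)` is essential in `M`. When `M` is polyform it is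
therefore dense in `M`, so `M` lies in the rational hull of `ϑ⁻¹(M)`. Since `ϑ` maps that hull into
`Ẽ(M)`, it maps `Ẽ(M)` into itself, and the endomorphism it induces there is some `Ω φ`; hence
`ϑ(M) ⊆ M`. In the other direction, injectivity of `E` extends an endomorphism of `Ẽ(M)` to `E`,
where it preserves a quasi-injective `M`; its restriction to `M` is the preimage under `Ω`, because
endomorphisms of `Ẽ(M)` are determined by their values on `M`. -/

section

variable {R E F : Type*} [Ring R] [AddCommGroup E] [Module R E] [AddCommGroup F] [Module R F]
  {A B M N : Submodule R E}

theorem EssentialIn.exists_smul_mem (h : EssentialIn R A B) {y : E} (hy : y ∈ B) (hy0 : y ≠ 0) :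
    ∃ r : R, r • y ∈ A ∧ r • y ≠ 0 := by
  by_contra! hA
  have hdisj : R ∙ y ⊓ A = ⊥ := (Submodule.eq_bot_iff _).mpr fun z ⟨hz, hzA⟩ => by
    obtain ⟨r, rfl⟩ := Submodule.mem_span_singleton.mp hz
    exact hA r hzA
  have hspan : R ∙ y = ⊥ := h _ ((Submodule.span_singleton_le_iff_mem y B).mpr hy) hdisj
  exact hy0 (Submodule.span_singleton_eq_bot.mp hspan)

theorem EssentialIn.inf_comap {C D : Submodule R F} (h : EssentialIn R C D) (f : E →ₗ[R] F)
    (hf : B ≤ D.comap f) : EssentialIn R (B ⊓ C.comap f) B := by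
  intro P hPB hP
  have hPC : P ⊓ C.comap f = ⊥ := by rwa [← inf_assoc, inf_eq_left.mpr hPB] at hP
  have hmap : P.map f = ⊥ := by
    refine h _ (Submodule.map_le_iff_le_comap.mpr (hPB.trans hf)) ?_
    rw [Submodule.map_inf_eq_map_inf_comap, hPC, Submodule.map_bot]
  have hPle : P ≤ C.comap f := Submodule.map_le_iff_le_comap.mp (hmap ▸ bot_le)
  rwa [inf_eq_left.mpr hPle] at hPC

theorem le_ratHull : M ≤ ratHull R E M :=
  fun m hm _ hϑ => hϑ m hm

theorem ratHull_mono (h : M ≤ N) : ratHull R E M ≤ ratHull R E N :=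
  fun _ hx ϑ hϑ => hx ϑ fun m hm => hϑ m (h hm)

theorem ratHull_ratHull_le : ratHull R E (ratHull R E M) ≤ ratHull R E M :=
  fun _ hx ϑ hϑ => hx ϑ fun _ hy => hy ϑ hϑ

theorem ratHull_comap_le (ϑ : Module.End R E) :
    ratHull R E (M.comap ϑ) ≤ (ratHull R E M).comap ϑ :=
  fun _ hx η hη => hx (η ∘ₗ ϑ) fun y hy => hη (ϑ y) hy

theorem DenseIn.le_ratHull (hA : DenseIn R A M) (hM : EssentialIn R M ⊤) :
    M ≤ ratHull R E A := by
  intro m hm η hη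
  by_contra hηm
  obtain ⟨r, hrM, hr0⟩ := hM.exists_smul_mem Submodule.mem_top hηm
  obtain ⟨s, hsA, hs0⟩ := hA (r • m) (M.smul_mem r hm) (r • η m) hrM hr0
  exact hs0 (by simpa only [map_smul] using hη _ hsA)

theorem PolyformIn.isFullyInvariant_ratHull (hpoly : PolyformIn R M) (hM : EssentialIn R M ⊤) :
    (ratHull R E M).IsFullyInvariant := by
  intro ϑ
  have hdense : DenseIn R (M ⊓ M.comap ϑ) M :=
    hpoly _ inf_le_left (hM.inf_comap ϑ le_top)
  have hM_le : M ≤ (ratHull R E M).comap ϑ :=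
    calc M ≤ ratHull R E (M ⊓ M.comap ϑ) := hdense.le_ratHull hM
      _ ≤ ratHull R E (M.comap ϑ) := ratHull_mono inf_le_right
      _ ≤ (ratHull R E M).comap ϑ := ratHull_comap_le ϑ
  calc ratHull R E M ≤ ratHull R E ((ratHull R E M).comap ϑ) := ratHull_mono hM_le
    _ ≤ (ratHull R E (ratHull R E M)).comap ϑ := ratHull_comap_le ϑ
    _ ≤ (ratHull R E M).comap ϑ := Submodule.comap_mono ratHull_ratHull_le

theorem ratHull_hom_ext [Module.Injective R E] {f g : ratHull R E M →ₗ[R] E}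
    (h : ∀ x : ratHull R E M, (x : E) ∈ M → f x = g x) : f = g := by
  obtain ⟨δ, hδ⟩ := Module.Injective.out (ratHull R E M).subtype
    (ratHull R E M).injective_subtype (f - g)
  have hδM : ∀ m ∈ M, δ m = 0 := fun m hm =>
    (hδ ⟨m, le_ratHull hm⟩).trans (sub_eq_zero.mpr (h _ hm))
  ext x
  exact sub_eq_zero.mp ((hδ x).symm.trans (x.2 δ hδM))

/-- `ψ ∈ End_R(N)` extends `φ ∈ End_R(M)`. The relation compares values on the common elements of
`M` and `N` inside `E`, so that it makes sense without a proof of `M ≤ N`. -/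
def Extends (φ : Module.End R M) (ψ : Module.End R N) : Prop :=
  ∀ (x : N) (m : M), (x : E) = m → (ψ x : E) = φ m

theorem Extends.left_unique {φ φ' : Module.End R M} {ψ : Module.End R N} (hMN : M ≤ N)
    (h : Extends φ ψ) (h' : Extends φ' ψ) : φ = φ' := by
  ext m
  exact (h ⟨m, hMN m.2⟩ m rfl).symm.trans (h' ⟨m, hMN m.2⟩ m rfl)

theorem Extends.right_unique [Module.Injective R E] {φ : Module.End R M}
    {ψ ψ' : Module.End R (ratHull R E M)} (h : Extends φ ψ) (h' : Extends φ ψ') : ψ = ψ' := by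
  have hcomp : (ratHull R E M).subtype ∘ₗ ψ = (ratHull R E M).subtype ∘ₗ ψ' :=
    ratHull_hom_ext fun x hx => (h x ⟨x, hx⟩ rfl).trans (h' x ⟨x, hx⟩ rfl).symm
  ext x
  exact LinearMap.congr_fun hcomp x

theorem exists_extends_of_isFullyInvariant [Module.Injective R E] (hM : M.IsFullyInvariant)
    (ψ : Module.End R N) : ∃ φ : Module.End R M, Extends φ ψ := by
  obtain ⟨ϑ, hϑ⟩ := Module.Injective.out N.subtype N.injective_subtype (N.subtype ∘ₗ ψ)
  refine ⟨ϑ.restrict (hM ϑ), fun x m hxm => ?_⟩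
  calc (ψ x : E) = ϑ x := (hϑ x).symm
    _ = ϑ m := congrArg ϑ hxm

theorem isFullyInvariant_of_exists_extends (hMN : M ≤ N) (hN : N.IsFullyInvariant)
    (h : ∀ ψ : Module.End R N, ∃ φ : Module.End R M, Extends φ ψ) : M.IsFullyInvariant := by
  intro ϑ m hm
  obtain ⟨φ, hφ⟩ := h (ϑ.restrict (hN ϑ))
  have hϑm : ϑ m = φ ⟨m, hm⟩ := hφ ⟨m, hMN hm⟩ ⟨m, hm⟩ rfl
  exact Submodule.mem_comap.mpr (hϑm ▸ (φ ⟨m, hm⟩).2)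

end

/-- Let `E` be an injective hull of `M ≤ E`, and let
`Ω : End_R(M) →+* End_R(Ẽ(M))` be the canonical embedding (sending `φ` to its
unique extension). If `M` is quasi-injective (`ϑ(M) ⊆ M` for all
`ϑ ∈ End_R(E)`), then `Ω` is a ring isomorphism. Conversely, if `M` is
polyform and `Ω` is a ring isomorphism, then `M` is quasi-injective. -/
theorem stmt19 (R : Type*) [Ring R] (E : Type*) [AddCommGroup E] [Module R E]
    (M : Submodule R E) (hE : Module.Injective R E)
    (hess : ∀ N : Submodule R E, N ⊓ M = ⊥ → N = ⊥)
    (Ω : Module.End R ↥M →+* Module.End R ↥(ratHull R E M))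
    (hΩ : ∀ (φ : Module.End R ↥M) (x : ↥(ratHull R E M)) (m : ↥M),
      (x : E) = (m : E) → ((Ω φ) x : E) = ((φ m : ↥M) : E)) :
    ((∀ ϑ : E →ₗ[R] E, ∀ m ∈ M, ϑ m ∈ M) → Function.Bijective Ω) ∧
    (PolyformIn R M → Function.Bijective Ω →
      ∀ ϑ : E →ₗ[R] E, ∀ m ∈ M, ϑ m ∈ M) := by
  have hext (φ : Module.End R M) : Extends φ (Ω φ) := hΩ φ
  refine ⟨fun hM => ⟨fun φ φ' h => ?_, fun ψ => ?_⟩, fun hpoly hbij => ?_⟩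
  · exact (hext φ).left_unique le_ratHull (h ▸ hext φ')
  · obtain ⟨φ, hφ⟩ := exists_extends_of_isFullyInvariant hM ψ
    exact ⟨φ, (hext φ).right_unique hφ⟩
  · have hess' : EssentialIn R M ⊤ := fun P _ => hess P
    have hhull : (ratHull R E M).IsFullyInvariant := hpoly.isFullyInvariant_ratHull hess'
    refine isFullyInvariant_of_exists_extends le_ratHull hhull fun ψ => ?_
    obtain ⟨φ, rfl⟩ := hbij.surjective ψ
    exact ⟨φ, hext φ⟩
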